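/- (Lemma 1(ii)) Under the balanced-design assumption, there exists a constant C depending only on δ such that Σ_{i,j,k} A_ij² A_ik² ≤ C K_Z; consequently (1/K_Z²) Σ_{i,j,k} A_ij² A_ik² → 0 as K_Z → ∞. -/

import Mathlib

/-!
Write `B = M_W D_θ M_W`. Nonnegativity of `θ` leaves only the diagonal term in
`(M_W)_ii² θ_i ≤ ∑_j (M_W)_ij² θ_j = (P⊥)_ii`, so `0 ≤ θ ≤ δ`. Row `i` of `B` is the image under
the contraction `M_W` of the vector `((M_W)_ik θ_k)_k`, whose squared norm is at most
`δ ∑_k (M_W)_ik² θ_k = δ (P⊥)_ii`, while row `i` of `P⊥` has squared norm `(P⊥)_ii`. Hence row `i`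
of `A = P⊥ - B` has squared norm at most `2(1 + δ)(P⊥)_ii`. Since `(P⊥)_ii ≤ 1`, the sum of the
squares of these norms is at most `(2(1 + δ))² tr P⊥`, and `tr P⊥ = K_Z`.
-/

open Matrix Finset

/-- The residual-maker (annihilator) projection `M_W = I - W (W'W)⁻¹ W'`. -/
noncomputable def annihilator {N KW : ℕ} (W : Matrix (Fin N) (Fin KW) ℝ) :
    Matrix (Fin N) (Fin N) ℝ :=
  1 - W * (Wᵀ * W)⁻¹ * Wᵀ

/-- The balanced-design assumption for the matrices `W`, `P⊥`, the vector `θ` and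
the constant `δ`: `W` has full column rank, `P⊥` is a symmetric idempotent matrix of rank
`K_Z` with `M_W P⊥ = P⊥ M_W = P⊥`, `θ` solves `∑_j (M_W)_ij² θ_j = (P⊥)_ii` with `θ_i ≥ 0`,
`min_i (M_W)_ii > 1/2`, and `(P⊥)_ii/(M_W)_ii² ≤ δ` for all `i`. -/
structure BalancedDesign {N KW : ℕ} (KZ : ℕ) (W : Matrix (Fin N) (Fin KW) ℝ)
    (Pperp : Matrix (Fin N) (Fin N) ℝ) (θ : Fin N → ℝ) (δ : ℝ) : Prop where
  hWrank : W.rank = KW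
  hPsymm : Pperp.IsSymm
  hPidem : Pperp * Pperp = Pperp
  hPrank : Pperp.rank = KZ
  hMP : annihilator W * Pperp = Pperp
  hPM : Pperp * annihilator W = Pperp
  hθ : ∀ i, ∑ j, (annihilator W i j) ^ 2 * θ j = Pperp i i
  hθnn : ∀ i, 0 ≤ θ i
  hMdiag : ∀ i, 1 / 2 < annihilator W i i
  hδ : ∀ i, Pperp i i / (annihilator W i i) ^ 2 ≤ δ

/-- The diagonal-free matrix `A = P⊥ − M_W D_θ M_W`. -/
noncomputable def Amat {N KW : ℕ} (W : Matrix (Fin N) (Fin KW) ℝ)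
    (Pperp : Matrix (Fin N) (Fin N) ℝ) (θ : Fin N → ℝ) : Matrix (Fin N) (Fin N) ℝ :=
  Pperp - annihilator W * Matrix.diagonal θ * annihilator W

theorem trace_eq_rank_of_isIdempotentElem {ι K : Type*} [Fintype ι] [Field K] {P : Matrix ι ι K}
    (hPP : IsIdempotentElem P) : P.trace = (P.rank : K) := by
  classical
  rw [← trace_toLin'_eq, rank, ← toLin'_apply']
  exact (LinearMap.IsIdempotentElem.isProj_range _ (hPP.map toLinAlgEquiv')).trace

section SymmetricIdempotent

variable {ι R : Type*} [Fintype ι]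

theorem sum_row_sq_eq_diag [CommSemiring R] {P : Matrix ι ι R} (hP : P.IsSymm)
    (hPP : IsIdempotentElem P) (i : ι) : ∑ j, P i j ^ 2 = P i i := by
  conv_rhs => rw [← hPP.eq, mul_apply]
  exact sum_congr rfl fun j _ ↦ by rw [hP.apply i j, sq]

variable [CommRing R] [LinearOrder R] [IsStrictOrderedRing R] {P : Matrix ι ι R}

theorem diag_nonneg_of_isSymm_of_isIdempotentElem
    (hP : P.IsSymm) (hPP : IsIdempotentElem P) (i : ι) : 0 ≤ P i i :=
  sum_row_sq_eq_diag hP hPP i ▸ sum_nonneg fun _ _ ↦ sq_nonneg _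

theorem diag_le_one_of_isSymm_of_isIdempotentElem
    (hP : P.IsSymm) (hPP : IsIdempotentElem P) (i : ι) : P i i ≤ 1 := by
  have h_sq : P i i ^ 2 ≤ P i i := calc
    P i i ^ 2 ≤ ∑ j, P i j ^ 2 := single_le_sum (fun j _ ↦ sq_nonneg (P i j)) (mem_univ i)
    _ = P i i := sum_row_sq_eq_diag hP hPP i
  nlinarith

theorem vecMul_dotProduct_vecMul_self_le {M : Matrix ι ι R}
    (hM : M.IsSymm) (hMM : IsIdempotentElem M) (v : ι → R) :
    (v ᵥ* M) ⬝ᵥ (v ᵥ* M) ≤ v ⬝ᵥ v := by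
  have h_proj : (v ᵥ* M) ⬝ᵥ (v ᵥ* M) = (v ᵥ* M) ⬝ᵥ v := by
    rw [← dotProduct_mulVec, ← vecMul_transpose, hM.eq, vecMul_vecMul, hMM.eq, dotProduct_comm]
  have h_residual : (v - v ᵥ* M) ⬝ᵥ (v - v ᵥ* M) = v ⬝ᵥ v - (v ᵥ* M) ⬝ᵥ (v ᵥ* M) := by
    simp only [sub_dotProduct, dotProduct_sub, h_proj, dotProduct_comm v (v ᵥ* M)]
    ring
  have h_nonneg : 0 ≤ (v - v ᵥ* M) ⬝ᵥ (v - v ᵥ* M) := sum_nonneg fun _ _ ↦ mul_self_nonneg _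
  exact sub_nonneg.mp (h_residual ▸ h_nonneg)

end SymmetricIdempotent

/-- Orthogonal projections `M`, `P` and nonnegative weights `θ` for which `M D_θ M` and `P` have
the same diagonal; this is what the bounds need to know of a `BalancedDesign`. The matching
condition is written entrywise, as `(M D_θ M)_ii = ∑_j M_ij² θ_j`. -/
structure DiagMatchedProjections {ι R : Type*} [Fintype ι] [Semiring R] [LE R]
    (M P : Matrix ι ι R) (θ : ι → R) : Prop where
  isSymm_left : M.IsSymm
  isIdempotentElem_left : IsIdempotentElem M
  isSymm_right : P.IsSymm
  isIdempotentElem_right : IsIdempotentElem P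
  sum_sq_mul_weight : ∀ i, ∑ j, M i j ^ 2 * θ j = P i i
  weight_nonneg : ∀ i, 0 ≤ θ i

/-- The matrix `P - M D_θ M`, which has zero diagonal under `DiagMatchedProjections`. `Amat` is the
case `M = annihilator W`. -/
def diagCorrected {ι R : Type*} [Fintype ι] [DecidableEq ι] [Ring R] (M P : Matrix ι ι R)
    (θ : ι → R) : Matrix ι ι R :=
  P - M * diagonal θ * M

namespace DiagMatchedProjections

variable {ι K : Type*} [Fintype ι] [Field K] [LinearOrder K] [IsStrictOrderedRing K]
  {M P : Matrix ι ι K} {θ : ι → K}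

theorem weight_le_div (h : DiagMatchedProjections M P θ) {i : ι} (hi : M i i ≠ 0) :
    θ i ≤ P i i / M i i ^ 2 := by
  rw [le_div_iff₀' (sq_pos_of_ne_zero hi), ← h.sum_sq_mul_weight]
  exact single_le_sum (f := fun j ↦ M i j ^ 2 * θ j)
    (fun j _ ↦ mul_nonneg (sq_nonneg _) (h.weight_nonneg j)) (mem_univ i)

variable [DecidableEq ι] {δ : K}

theorem sum_row_mul_diagonal_mul_sq_le (h : DiagMatchedProjections M P θ) (hδ : ∀ i, θ i ≤ δ)
    (i : ι) : ∑ j, (M * diagonal θ * M) i j ^ 2 ≤ δ * P i i := by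
  set v : ι → K := (M * diagonal θ) i
  calc ∑ j, (M * diagonal θ * M) i j ^ 2
      = (v ᵥ* M) ⬝ᵥ (v ᵥ* M) := by simp only [mul_apply_eq_vecMul, dotProduct, sq, v]
    _ ≤ v ⬝ᵥ v := vecMul_dotProduct_vecMul_self_le h.isSymm_left h.isIdempotentElem_left v
    _ = ∑ k, θ k * (M i k ^ 2 * θ k) :=
        sum_congr rfl fun k _ ↦ by simp only [v, mul_diagonal]; ring
    _ ≤ ∑ k, δ * (M i k ^ 2 * θ k) := by
        gcongr with k
        · exact mul_nonneg (sq_nonneg _) (h.weight_nonneg k)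
        · exact hδ k
    _ = δ * P i i := by rw [← mul_sum, h.sum_sq_mul_weight]

theorem sum_row_diagCorrected_sq_le (h : DiagMatchedProjections M P θ) (hδ : ∀ i, θ i ≤ δ)
    (i : ι) : ∑ j, diagCorrected M P θ i j ^ 2 ≤ 2 * (1 + δ) * P i i := calc
  ∑ j, diagCorrected M P θ i j ^ 2
    ≤ ∑ j, 2 * (P i j ^ 2 + (M * diagonal θ * M) i j ^ 2) := by
      gcongr with j
      simpa only [diagCorrected, Matrix.sub_apply, sub_eq_add_neg, neg_sq] using
        add_sq_le (a := P i j) (b := -(M * diagonal θ * M) i j)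
  _ = 2 * (P i i + ∑ j, (M * diagonal θ * M) i j ^ 2) := by
      rw [← mul_sum, sum_add_distrib, sum_row_sq_eq_diag h.isSymm_right h.isIdempotentElem_right]
  _ ≤ 2 * (P i i + δ * P i i) := by
      gcongr
      exact h.sum_row_mul_diagonal_mul_sq_le hδ i
  _ = 2 * (1 + δ) * P i i := by ring

theorem sum_diagCorrected_sq_mul_sq_le (h : DiagMatchedProjections M P θ) (hδ : ∀ i, θ i ≤ δ) :
    ∑ i, ∑ j, ∑ k, diagCorrected M P θ i j ^ 2 * diagCorrected M P θ i k ^ 2 ≤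
      (2 * (1 + δ)) ^ 2 * (P.rank : K) := calc
  ∑ i, ∑ j, ∑ k, diagCorrected M P θ i j ^ 2 * diagCorrected M P θ i k ^ 2
    = ∑ i, (∑ j, diagCorrected M P θ i j ^ 2) ^ 2 := by simp only [sq (∑ _, _), sum_mul_sum]
  _ ≤ ∑ i, (2 * (1 + δ) * P i i) ^ 2 := by
      gcongr with i
      exact h.sum_row_diagCorrected_sq_le hδ i
  _ = ∑ i, (2 * (1 + δ)) ^ 2 * P i i ^ 2 := by simp only [mul_pow]
  _ ≤ ∑ i, (2 * (1 + δ)) ^ 2 * P i i := by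
      gcongr with i
      exact pow_le_of_le_one
        (diag_nonneg_of_isSymm_of_isIdempotentElem h.isSymm_right h.isIdempotentElem_right i)
        (diag_le_one_of_isSymm_of_isIdempotentElem h.isSymm_right h.isIdempotentElem_right i)
        two_ne_zero
  _ = (2 * (1 + δ)) ^ 2 * (P.rank : K) := by
      rw [← mul_sum, ← trace_eq_rank_of_isIdempotentElem h.isIdempotentElem_right]
      rfl

end DiagMatchedProjections

theorem isSymm_annihilator {N KW : ℕ} (W : Matrix (Fin N) (Fin KW) ℝ) :
    (annihilator W).IsSymm := by
  simp [annihilator, IsSymm, transpose_nonsing_inv, Matrix.mul_assoc]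

theorem isIdempotentElem_annihilator {N KW : ℕ} (W : Matrix (Fin N) (Fin KW) ℝ) :
    IsIdempotentElem (annihilator W) := by
  refine IsIdempotentElem.one_sub ?_
  by_cases h : IsUnit (Wᵀ * W).det
  · calc W * (Wᵀ * W)⁻¹ * Wᵀ * (W * (Wᵀ * W)⁻¹ * Wᵀ)
        = W * ((Wᵀ * W)⁻¹ * (Wᵀ * W)) * (Wᵀ * W)⁻¹ * Wᵀ := by simp only [Matrix.mul_assoc]
      _ = W * (Wᵀ * W)⁻¹ * Wᵀ := by rw [nonsing_inv_mul _ h, Matrix.mul_one]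
  -- A singular Gram matrix has inverse `0` by convention, so that `annihilator W = 1`.
  · simp [nonsing_inv_apply_not_isUnit _ h, IsIdempotentElem.zero]

namespace BalancedDesign

variable {N KW KZ : ℕ} {W : Matrix (Fin N) (Fin KW) ℝ} {P : Matrix (Fin N) (Fin N) ℝ}
  {θ : Fin N → ℝ} {δ : ℝ}

theorem diagMatchedProjections (h : BalancedDesign KZ W P θ δ) :
    DiagMatchedProjections (annihilator W) P θ where
  isSymm_left := isSymm_annihilator W
  isIdempotentElem_left := isIdempotentElem_annihilator W
  isSymm_right := h.hPsymm
  isIdempotentElem_right := h.hPidem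
  sum_sq_mul_weight := h.hθ
  weight_nonneg := h.hθnn

theorem theta_le (h : BalancedDesign KZ W P θ δ) (i : Fin N) : θ i ≤ δ :=
  (h.diagMatchedProjections.weight_le_div (one_half_pos.trans (h.hMdiag i)).ne').trans (h.hδ i)

end BalancedDesign

theorem tendsto_one_div_sq_mul_of_isBigO {α : Type*} {l : Filter α} {r S : α → ℝ}
    (hr : Filter.Tendsto r l Filter.atTop) (hS : S =O[l] r) :
    Filter.Tendsto (fun a ↦ 1 / r a ^ 2 * S a) l (nhds 0) := by
  have h_sq : r =o[l] fun a ↦ r a ^ 2 := by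
    simpa [Function.comp_def] using
      (Asymptotics.isLittleO_pow_pow_atTop_of_lt (𝕜 := ℝ) one_lt_two).comp_tendsto hr
  simpa only [one_div_mul_eq_div] using (hS.trans_isLittleO h_sq).tendsto_div_nhds_zero

universe u v

theorem lemma1_part_ii_general (δ : ℝ) :
    ∃ C : ℝ, 0 < C ∧
      (∀ {ι : Type u} [Fintype ι] [DecidableEq ι] {M P : Matrix ι ι ℝ} {θ : ι → ℝ},
        DiagMatchedProjections M P θ → (∀ i, θ i ≤ δ) →
        ∑ i, ∑ j, ∑ k, diagCorrected M P θ i j ^ 2 * diagCorrected M P θ i k ^ 2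
          ≤ C * (P.rank : ℝ)) ∧
      (∀ {α : Type v} {l : Filter α} {ι : α → Type u} [∀ a, Fintype (ι a)] [∀ a, DecidableEq (ι a)]
        {M P : ∀ a, Matrix (ι a) (ι a) ℝ} {θ : ∀ a, ι a → ℝ},
        (∀ a, DiagMatchedProjections (M a) (P a) (θ a)) → (∀ a i, θ a i ≤ δ) →
        Filter.Tendsto (fun a ↦ (P a).rank) l Filter.atTop →
        Filter.Tendsto
          (fun a ↦ 1 / ((P a).rank : ℝ) ^ 2 *
            ∑ i, ∑ j, ∑ k, diagCorrected (M a) (P a) (θ a) i j ^ 2 *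
              diagCorrected (M a) (P a) (θ a) i k ^ 2)
          l (nhds 0)) := by
  -- The absolute value keeps the constant positive when `δ ≤ -1`, where the index sets are empty.
  have hbound {ι : Type u} [Fintype ι] [DecidableEq ι] {M P : Matrix ι ι ℝ} {θ : ι → ℝ}
      (h : DiagMatchedProjections M P θ) (hδ : ∀ i, θ i ≤ δ) :=
    h.sum_diagCorrected_sq_mul_sq_le fun i ↦ (hδ i).trans (le_abs_self δ)
  refine ⟨(2 * (1 + |δ|)) ^ 2, by positivity, hbound, fun h hδ hrank ↦ ?_⟩
  refine tendsto_one_div_sq_mul_of_isBigO (tendsto_natCast_atTop_atTop.comp hrank) ?_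
  refine .of_bound ((2 * (1 + |δ|)) ^ 2) (.of_forall fun a ↦ ?_)
  rw [Real.norm_of_nonneg (by positivity), Real.norm_of_nonneg (Nat.cast_nonneg _)]
  exact hbound (h a) (hδ a)

/-- Lemma 1(ii): Under the balanced-design assumption, there exists a constant
`C` depending only on `δ` such that `∑_{i,j,k} A_ij² A_ik² ≤ C K_Z`; consequently
`(1/K_Z²) ∑_{i,j,k} A_ij² A_ik² → 0` as `K_Z → ∞`. -/
theorem lemma1_part_ii (δ : ℝ) (hδ : δ < 1) :
    ∃ C : ℝ, 0 < C ∧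
      (∀ (N KW KZ : ℕ) (W : Matrix (Fin N) (Fin KW) ℝ)
        (Pperp : Matrix (Fin N) (Fin N) ℝ) (θ : Fin N → ℝ),
        BalancedDesign KZ W Pperp θ δ →
        ∑ i, ∑ j, ∑ k, (Amat W Pperp θ i j) ^ 2 * (Amat W Pperp θ i k) ^ 2
          ≤ C * (KZ : ℝ)) ∧
      (∀ (N KW KZ : ℕ → ℕ)
        (W : ∀ n, Matrix (Fin (N n)) (Fin (KW n)) ℝ)
        (Pperp : ∀ n, Matrix (Fin (N n)) (Fin (N n)) ℝ)
        (θ : ∀ n, Fin (N n) → ℝ),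
        (∀ n, BalancedDesign (KZ n) (W n) (Pperp n) (θ n) δ) →
        Filter.Tendsto KZ Filter.atTop Filter.atTop →
        Filter.Tendsto
          (fun n => (1 / (KZ n : ℝ) ^ 2) *
            ∑ i, ∑ j, ∑ k,
              (Amat (W n) (Pperp n) (θ n) i j) ^ 2 * (Amat (W n) (Pperp n) (θ n) i k) ^ 2)
          Filter.atTop (nhds 0)) := by
  obtain ⟨C, hC, hbound, hlim⟩ := lemma1_part_ii_general δ
  refine ⟨C, hC, fun _ _ _ _ _ _ h ↦ h.hPrank ▸ hbound h.diagMatchedProjections h.theta_le,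
    fun _ _ KZ _ P _ h hKZ ↦ ?_⟩
  obtain rfl : (fun n ↦ (P n).rank) = KZ := funext fun n ↦ (h n).hPrank
  exact hlim (fun n ↦ (h n).diagMatchedProjections) (fun n ↦ (h n).theta_le) hKZ
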